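/- For every n ∈ ℕ, the number of Gessel walks of length 2n that return to the origin satisfies g(2n;0,0)·(5/3)ₙ·(2)ₙ = (5/6)ₙ·(1/2)ₙ·16ⁿ (as rational numbers), and g(2n+1;0,0) = 0; equivalently, G(t;0,0) = ₃F₂(5/6, 1/2, 1; 5/3, 2 | 16t²) = Σ_{n≥0} ((5/6)ₙ(1/2)ₙ/((5/3)ₙ(2)ₙ))·(4t)^{2n}. -/

import Mathlib

/-!
# The number of Gessel excursions

The proof follows the invariant method for quadrant walks, and is purely algebraic. Write
`Q(x, y; t)` for the generating function of Gessel walks and `G = Q(0, 0; t)`; the second variable is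
replaced by `y = tz`, so that all series live in `ℚ[x, z]⟦t⟧`.

*One catalytic variable.* The step-by-step construction of walks gives (`functional_equation`)
`κ Q(x, tz) = xz - Q(x, 0) - (1 + tz) Q(0, tz) + G` with `κ = xz - 1 - t(z + x²z + t x²z²)`.
On the curve `κ = 0` two functions of `x` alone coincide with functions of `z` alone:
`L(x) = 1/x + t Q(x, 0)` with `M(z) = z/(1 + tz) - t((1 + tz) Q(0, tz) - G)`, and
`I(x) = (x + 1/x) - t(x + 1/x)²` with `J(z) = (1 - tz)²/z + z/(1 + tz)²`.
Suitable `α = -1 - 2t²G`, `β`, `γ` in `ℚ⟦t⟧` make `tL³ + αL² + (β + I)L + γ` vanish at `x = 0`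
(`exists_cubic_dvd`). An invariant of this kind that vanishes at `x = 0` is zero
(`invariant_lemma`), whence the cubic equation `exists_cubic_eq_zero` for `L(x)`.

*Three double roots.* Differentiating the cubic equation in `x` shows that the cubic in `L` has a
double root at each zero of `I'(x)`, that is, at `x = 1`, `x = -1` and at the power series
`X₀ = 2t(1 + X₀²)` (`double_root`). The values of `I` there are `2 - 4t`, `-2 - 4t`, `1/(4t)`.
The three double roots are the roots of the single cubic `2tL³ + αL² - γ`; Vieta's relations and the
three values of `I` leave a rational curve, parametrized by a series `Z` (`exists_param`,
`exists_Z`): `256 t² Z⁶ = (Z² - 1)(Z² + 3)³` and `4Z³(1 + 2t²G) = Z⁴ + 6Z² - 3`.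

*Differential equation.* With `θ = t d/dt` and `H = 1 + 2t²G`, these two equations imply
`(θ - 2/3) θ H = 16t² (θ - 1/3)(θ - 1) H` (`ode`). On coefficients this is a recurrence expressing
`g(n + 2; 0, 0)` by `g(n; 0, 0)` (`q_rec`), which is the one satisfied by the closed form.
-/


noncomputable section

def gesselSteps : Set (ℤ × ℤ) := {(1, 0), (-1, 0), (1, 1), (-1, -1)}

/-- The position of the walk `w` after its first `k` steps. -/
def walkPos {n : ℕ} (w : Fin n → ℤ × ℤ) (k : ℕ) : ℤ × ℤ :=
  ∑ m ∈ Finset.univ.filter (fun m : Fin n => (m : ℕ) < k), w m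

/-- `w` is a Gessel walk: every step is admissible and the walk never
leaves the first quadrant. -/
def IsGesselWalk {n : ℕ} (w : Fin n → ℤ × ℤ) : Prop :=
  (∀ m, w m ∈ gesselSteps) ∧ ∀ k ≤ n, 0 ≤ (walkPos w k).1 ∧ 0 ≤ (walkPos w k).2

/-- The number of Gessel walks of length `n` ending at `(i, j)`. -/
def g (n : ℕ) (i j : ℤ) : ℕ :=
  Nat.card {w : Fin n → ℤ × ℤ // IsGesselWalk w ∧ walkPos w n = (i, j)}

/-! ### Recurrence for the numbers of walks -/

/-- The four Gessel steps, enumerated. -/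
def stepVec : Fin 4 → ℤ × ℤ := ![(1, 0), (-1, 0), (1, 1), (-1, -1)]

lemma stepVec_injective : Function.Injective stepVec := by
  intro a b h
  fin_cases a <;> fin_cases b <;> simp_all [stepVec]

lemma mem_gesselSteps_iff (s : ℤ × ℤ) : s ∈ gesselSteps ↔ ∃ a, stepVec a = s := by
  constructor
  · rintro (h | h | h | h)
    · exact ⟨0, by simp [stepVec, h]⟩
    · exact ⟨1, by simp [stepVec, h]⟩
    · exact ⟨2, by simp [stepVec, h]⟩
    · exact ⟨3, by simp [stepVec, Set.mem_singleton_iff.mp h]⟩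
  · rintro ⟨a, rfl⟩
    fin_cases a <;> simp [stepVec, gesselSteps]

lemma walkPos_snoc_of_le {n : ℕ} (w : Fin n → ℤ × ℤ) (s : ℤ × ℤ) {k : ℕ} (hk : k ≤ n) :
    walkPos (Fin.snoc w s : Fin (n + 1) → ℤ × ℤ) k = walkPos w k := by
  unfold walkPos
  rw [Finset.sum_filter, Finset.sum_filter, Fin.sum_univ_castSucc]
  simp [Nat.not_lt.mpr hk]

lemma walkPos_snoc_last {n : ℕ} (w : Fin n → ℤ × ℤ) (s : ℤ × ℤ) :
    walkPos (Fin.snoc w s : Fin (n + 1) → ℤ × ℤ) (n + 1) = walkPos w n + s := by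
  unfold walkPos
  rw [Finset.sum_filter, Finset.sum_filter, Fin.sum_univ_castSucc]
  simp

/-- Appending a step to a Gessel walk: only the new endpoint has to be tested. -/
lemma isGesselWalk_snoc {n : ℕ} (w : Fin n → ℤ × ℤ) (s : ℤ × ℤ) :
    IsGesselWalk (Fin.snoc w s : Fin (n + 1) → ℤ × ℤ) ↔
      IsGesselWalk w ∧ s ∈ gesselSteps ∧
        0 ≤ (walkPos w n + s).1 ∧ 0 ≤ (walkPos w n + s).2 := by
  unfold IsGesselWalk
  constructor
  · rintro ⟨h1, h2⟩
    refine ⟨⟨fun m => by simpa using h1 m.castSucc, fun k hk => ?_⟩, by simpa using h1 (Fin.last n),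
      ?_⟩
    · have := h2 k (by omega)
      rwa [walkPos_snoc_of_le w s hk] at this
    · have := h2 (n + 1) le_rfl
      rwa [walkPos_snoc_last] at this
  · rintro ⟨⟨h1, h2⟩, h3, h4⟩
    refine ⟨fun m => ?_, fun k hk => ?_⟩
    · refine Fin.lastCases ?_ (fun i => ?_) m
      · simpa using h3
      · simpa using h1 i
    · rcases Nat.lt_or_ge n k with h | h
      · obtain rfl : k = n + 1 := by omega
        rwa [walkPos_snoc_last]
      · rw [walkPos_snoc_of_le w s h]
        exact h2 k h

/-- The Gessel walks of length `n` ending at `p`. -/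
abbrev Walks (n : ℕ) (p : ℤ × ℤ) : Type :=
  {w : Fin n → ℤ × ℤ // IsGesselWalk w ∧ walkPos w n = p}

instance walks_finite (n : ℕ) (p : ℤ × ℤ) : Finite (Walks n p) := by
  have hfin : Finite gesselSteps := by
    unfold gesselSteps
    exact Set.Finite.to_subtype (by simp)
  refine Finite.of_injective
    (fun w : Walks n p => (fun m => ⟨w.1 m, w.2.1.1 m⟩ : Fin n → gesselSteps)) ?_
  intro a b h
  ext1
  funext m
  have := congrFun h m
  simpa using this

/-- Removing the last step of a nonempty walk. -/
def walksEquiv (n : ℕ) (p : ℤ × ℤ) (hp : 0 ≤ p.1 ∧ 0 ≤ p.2) :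
    (Σ a : Fin 4, Walks n (p - stepVec a)) ≃ Walks (n + 1) p :=
  Equiv.ofBijective
    (fun x => ⟨Fin.snoc x.2.1 (stepVec x.1), by
      have h := x.2.2
      rw [isGesselWalk_snoc, walkPos_snoc_last, h.2, sub_add_cancel]
      exact ⟨⟨h.1, (mem_gesselSteps_iff _).2 ⟨_, rfl⟩, hp⟩, rfl⟩⟩) (by
    constructor
    · rintro ⟨a, w, hw⟩ ⟨b, v, hv⟩ h
      simp only [Subtype.mk.injEq] at h
      have h1 : stepVec a = stepVec b := by
        have := congrFun h (Fin.last n)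
        simpa using this
      have h2 : w = v := by
        funext m
        have := congrFun h m.castSucc
        simpa using this
      obtain rfl := stepVec_injective h1
      subst h2
      rfl
    · rintro ⟨w, hw1, hw2⟩
      have hsn : (Fin.snoc (Fin.init w) (w (Fin.last n)) : Fin (n + 1) → ℤ × ℤ) = w :=
        Fin.snoc_init_self w
      obtain ⟨a, ha⟩ := (mem_gesselSteps_iff _).1 (hw1.1 (Fin.last n))
      rw [← hsn, isGesselWalk_snoc] at hw1
      rw [← hsn, walkPos_snoc_last] at hw2
      refine ⟨⟨a, Fin.init w, hw1.1, ?_⟩, ?_⟩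
      · rw [ha, ← hw2, add_sub_cancel_right]
      · ext1
        simp [ha])

lemma g_succ (n : ℕ) (i j : ℤ) (hi : 0 ≤ i) (hj : 0 ≤ j) :
    g (n + 1) i j = g n (i - 1) j + g n (i + 1) j + g n (i - 1) (j - 1) + g n (i + 1) (j + 1) := by
  have h := Nat.card_congr (walksEquiv n (i, j) ⟨hi, hj⟩)
  rw [Nat.card_sigma, Fin.sum_univ_four] at h
  unfold g
  rw [← h]
  simp [Walks, stepVec]

lemma g_eq_zero_of_neg (n : ℕ) (i j : ℤ) (h : i < 0 ∨ j < 0) : g n i j = 0 := by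
  unfold g
  rw [Nat.card_eq_zero]
  left
  refine ⟨fun ⟨w, h1, h2⟩ => ?_⟩
  have := h1.2 n le_rfl
  rw [h2] at this
  simp only at this
  omega

lemma g_zero (i j : ℤ) : g 0 i j = if i = 0 ∧ j = 0 then 1 else 0 := by
  unfold g
  split_ifs with h
  · rw [Nat.card_eq_one_iff_unique]
    obtain ⟨rfl, rfl⟩ := h
    exact ⟨⟨fun a b => Subtype.ext (Subsingleton.elim _ _)⟩,
      ⟨⟨fun m => m.elim0, ⟨fun m => m.elim0, by simp [walkPos]⟩, by
        simp only [walkPos, Finset.univ_eq_empty, Finset.filter_empty, Finset.sum_empty]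
        rfl⟩⟩⟩
  · rw [Nat.card_eq_zero]
    left
    refine ⟨fun ⟨w, h1, h2⟩ => h ?_⟩
    simp [walkPos] at h2
    exact ⟨by simpa using (congrArg Prod.fst h2).symm, by simpa using (congrArg Prod.snd h2).symm⟩

/-- A walk of length `n` cannot leave the square `[0, n]²`. -/
lemma g_eq_zero_of_lt (n : ℕ) : ∀ i j : ℤ, ((n : ℤ) < i ∨ (n : ℤ) < j) → g n i j = 0 := by
  induction n with
  | zero =>
    intro i j h
    rw [g_zero, if_neg]
    push_cast at h
    omega
  | succ n ih =>
    intro i j h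
    push_cast at h
    rcases lt_or_ge i 0 with hi | hi
    · exact g_eq_zero_of_neg _ _ _ (Or.inl hi)
    rcases lt_or_ge j 0 with hj | hj
    · exact g_eq_zero_of_neg _ _ _ (Or.inr hj)
    rw [g_succ n i j hi hj, ih _ _ (by omega), ih _ _ (by omega), ih _ _ (by omega),
      ih _ _ (by omega)]

/-! ### Generating functions and the functional equation -/

/-- The ring `ℚ[x, z]⟦t⟧`, with `ℚ[x, z]` encoded as `ℚ[x][z]`. -/
abbrev Rxz : Type := PowerSeries (Polynomial (Polynomial ℚ))

/-- The ring `ℚ[x]⟦t⟧` (also used for `ℚ[z]⟦t⟧`). -/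
abbrev Rx : Type := PowerSeries (Polynomial ℚ)

/-- The variable `x` of `ℚ[x, z]⟦t⟧`. -/
def xv : Rxz := PowerSeries.C (Polynomial.C Polynomial.X)

/-- The variable `z` of `ℚ[x, z]⟦t⟧`; it stands for `y / t`. -/
def zv : Rxz := PowerSeries.C Polynomial.X

/-- The variable `t` of `ℚ[x, z]⟦t⟧`. -/
def tv : Rxz := PowerSeries.X

/-- The inclusion `ℚ[x]⟦t⟧ → ℚ[x, z]⟦t⟧`. -/
def inX : Rx →+* Rxz := PowerSeries.map Polynomial.C

/-- The inclusion `ℚ[z]⟦t⟧ → ℚ[x, z]⟦t⟧`. -/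
def inZ : Rx →+* Rxz := PowerSeries.map (Polynomial.mapRingHom Polynomial.C)

/-- The inclusion `ℚ⟦t⟧ → ℚ[x]⟦t⟧`. -/
def inT : PowerSeries ℚ →+* Rx := PowerSeries.map Polynomial.C

/-- The kernel `κ = xz - 1 - t(z + x²z + t x²z²)`, i.e. `K(x, tz) / t`
for `K(x, y) = xy - t(y + x²y + 1 + x²y²)`. -/
def kap : Rxz := xv * zv - 1 - tv * (zv + xv ^ 2 * zv + tv * xv ^ 2 * zv ^ 2)

/-- Counts as a function of natural coordinates, with rational values. -/
def q (n i j : ℕ) : ℚ := (g n i j : ℚ)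

lemma q_zero (i j : ℕ) : q 0 i j = if i = 0 ∧ j = 0 then 1 else 0 := by
  unfold q
  rw [g_zero]
  simp

lemma q_eq_zero (n i j : ℕ) (h : n < i ∨ n < j) : q n i j = 0 := by
  unfold q
  rw [g_eq_zero_of_lt n i j (by omega)]
  simp

lemma q_succ_zero_zero (n : ℕ) : q (n + 1) 0 0 = q n 1 0 + q n 1 1 := by
  unfold q
  rw [g_succ n _ _ (by simp) (by simp), g_eq_zero_of_neg n _ _ (Or.inl (by simp)),
    g_eq_zero_of_neg n (_ - 1) _ (Or.inl (by simp))]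
  simp

lemma q_succ_zero_succ (n j : ℕ) : q (n + 1) 0 (j + 1) = q n 1 (j + 1) + q n 1 (j + 2) := by
  unfold q
  rw [g_succ n _ _ (by simp) (by positivity), g_eq_zero_of_neg n _ _ (Or.inl (by simp)),
    g_eq_zero_of_neg n (_ - 1) _ (Or.inl (by simp))]
  push_cast
  ring_nf

lemma q_succ_succ_zero (n i : ℕ) :
    q (n + 1) (i + 1) 0 = q n i 0 + q n (i + 2) 0 + q n (i + 2) 1 := by
  unfold q
  rw [g_succ n _ _ (by positivity) (by simp), g_eq_zero_of_neg n (_ - 1) (_ - 1) (Or.inr (by simp))]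
  push_cast
  ring_nf

lemma q_succ_succ_succ (n i j : ℕ) :
    q (n + 1) (i + 1) (j + 1) =
      q n i (j + 1) + q n (i + 2) (j + 1) + q n i j + q n (i + 2) (j + 2) := by
  unfold q
  rw [g_succ n _ _ (by positivity) (by positivity)]
  push_cast
  ring_nf

/-- The generating function `Q(x, tz; t)` of Gessel walks. -/
def Qxz : Rxz := PowerSeries.mk fun m =>
  ∑ j ∈ Finset.range (m + 1), Polynomial.monomial j
    (∑ i ∈ Finset.range (m + 1), Polynomial.monomial i (q (m - j) i j))

/-- The generating function `Q(x, 0; t)`. -/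
def Qx : Rx := PowerSeries.mk fun n =>
  ∑ i ∈ Finset.range (n + 1), Polynomial.monomial i (q n i 0)

/-- The generating function `Q(0, tz; t)`. -/
def Qz : Rx := PowerSeries.mk fun m =>
  ∑ j ∈ Finset.range (m + 1), Polynomial.monomial j (q (m - j) 0 j)

/-- The generating function `G = Q(0, 0; t)` of excursions. -/
def Q0 : PowerSeries ℚ := PowerSeries.mk fun n => q n 0 0

lemma coeff_Qxz (m j i : ℕ) : ((PowerSeries.coeff m Qxz).coeff j).coeff i =
    if j ≤ m then q (m - j) i j else 0 := by
  simp only [Qxz, PowerSeries.coeff_mk, Polynomial.finsetSum_coeff, Polynomial.coeff_monomial,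
    Finset.sum_ite_eq', Finset.mem_range, Nat.lt_succ_iff]
  split_ifs with h
  · simp only [Polynomial.finsetSum_coeff, Polynomial.coeff_monomial,
      Finset.sum_ite_eq', Finset.mem_range, Nat.lt_succ_iff, ite_eq_left_iff]
    intro h'
    rw [q_eq_zero _ _ _ (Or.inl (by omega))]
  · simp

lemma coeff_Qx (m i : ℕ) : (PowerSeries.coeff m Qx).coeff i = q m i 0 := by
  simp only [Qx, PowerSeries.coeff_mk, Polynomial.finsetSum_coeff, Polynomial.coeff_monomial,
    Finset.sum_ite_eq', Finset.mem_range, Nat.lt_succ_iff, ite_eq_left_iff]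
  intro h'
  rw [q_eq_zero _ _ _ (Or.inl (by omega))]

lemma coeff_Qz (m j : ℕ) : (PowerSeries.coeff m Qz).coeff j =
    if j ≤ m then q (m - j) 0 j else 0 := by
  simp only [Qz, PowerSeries.coeff_mk, Polynomial.finsetSum_coeff, Polynomial.coeff_monomial,
    Finset.sum_ite_eq', Finset.mem_range, Nat.lt_succ_iff]

lemma constantCoeff_Qxz (j i : ℕ) : ((PowerSeries.constantCoeff Qxz).coeff j).coeff i =
    if j = 0 ∧ i = 0 then 1 else 0 := by
  have h := coeff_Qxz 0 j i
  rw [PowerSeries.coeff_zero_eq_constantCoeff_apply] at h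
  rw [h]
  rcases j with _ | j <;> simp [q_zero]

lemma constantCoeff_Qx (i : ℕ) : (PowerSeries.constantCoeff Qx).coeff i =
    if i = 0 then 1 else 0 := by
  have h := coeff_Qx 0 i
  rw [PowerSeries.coeff_zero_eq_constantCoeff_apply] at h
  rw [h]
  simp [q_zero]

lemma constantCoeff_Qz (j : ℕ) : (PowerSeries.constantCoeff Qz).coeff j =
    if j = 0 then 1 else 0 := by
  have h := coeff_Qz 0 j
  rw [PowerSeries.coeff_zero_eq_constantCoeff_apply] at h
  rw [h]
  rcases j with _ | j <;> simp [q_zero]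

lemma Rxz_ext {f h : Rxz}
    (H : ∀ m j i, ((PowerSeries.coeff m f).coeff j).coeff i =
      ((PowerSeries.coeff m h).coeff j).coeff i) : f = h := by
  ext m j i
  exact H m j i

/-- The functional equation of Gessel walks,
`κ Q(x, tz) = xz - Q(x, 0) - (1 + tz) Q(0, tz) + Q(0, 0)`. -/
lemma functional_equation :
    kap * Qxz = xv * zv - inX Qx - (1 + tv * zv) * inZ Qz + inX (inT Q0) := by
  have key : xv * (zv * Qxz) + inX Qx + inZ Qz + tv * (zv * inZ Qz) =
      xv * zv + Qxz + tv * (zv * Qxz) + tv * (xv * (xv * (zv * Qxz)))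
        + tv * (tv * (xv * (xv * (zv * (zv * Qxz))))) + inX (inT Q0) := by
    apply Rxz_ext
    intro m j i
    simp only [xv, zv, tv, map_add, Polynomial.coeff_add, PowerSeries.coeff_C_mul, inX, inZ,
      PowerSeries.coeff_map, Polynomial.coe_mapRingHom, Polynomial.coeff_map,
      Polynomial.coeff_C_mul, inT, Q0]
    rcases m with _ | _ | m <;> rcases j with _ | _ | j <;> rcases i with _ | _ | i <;>
    simp [PowerSeries.coeff_succ_X_mul, coeff_Qxz, coeff_Qx, coeff_Qz, Polynomial.coeff_C,
      Polynomial.coeff_X_mul, PowerSeries.coeff_C, Polynomial.coeff_X, q_zero, constantCoeff_Qx,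
      constantCoeff_Qxz, constantCoeff_Qz, Polynomial.coeff_one, q_succ_zero_zero,
      q_succ_succ_zero]
    all_goals try ring1
    -- the remaining coefficients carry the truncation `j ≤ m` of `z = y / t`
    all_goals
      rcases Nat.lt_or_ge m j with h | h
      · rcases Nat.lt_or_ge (m + 1) j with h' | h'
        · simp [Nat.not_le.mpr h, Nat.not_le.mpr h']
        · obtain rfl : j = m + 1 := by omega
          simp [q_zero]
      · rw [Nat.succ_sub h]
        simp only [h, Nat.le_succ_of_le h, if_true, Nat.succ_eq_add_one, q_succ_zero_succ,
          q_succ_succ_succ]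
        ring
  unfold kap
  linear_combination key

/-! ### Invariants and the cubic equation -/

/-- On the curve `xz = 1` a polynomial in `x⁴ ℚ[x]` and one in `x³ ℚ[z]` can only agree if both
vanish: the first has `x`-exponents at least `4`, the second at most `3`. -/
lemma eq_zero_of_kernel_dvd (ρ σ : Polynomial ℚ) (h : Polynomial (Polynomial ℚ))
    (H : Polynomial.C Polynomial.X ^ 4 * Polynomial.C ρ
      - Polynomial.C Polynomial.X ^ 3 * σ.map Polynomial.C
      = (Polynomial.C Polynomial.X * Polynomial.X - 1) * h) : ρ = 0 ∧ σ = 0 ∧ h = 0 := by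
  rw [← Polynomial.C_pow, ← Polynomial.C_pow, sub_mul, one_mul, mul_assoc] at H
  -- coefficients of `z ^ (j + 1) x ^ (i + 1)` and the boundary cases
  have hss : ∀ i j, (h.coeff (j + 1)).coeff (i + 1) =
      (h.coeff j).coeff i + if i = 2 then σ.coeff (j + 1) else 0 := by
    intro i j
    have := congrArg (fun f => (f.coeff (j + 1)).coeff (i + 1)) H
    simp only [Polynomial.coeff_sub, Polynomial.coeff_C_mul, Polynomial.coeff_X_mul,
      Polynomial.coeff_map, Polynomial.coeff_C_succ, Polynomial.coeff_mul_C, zero_mul,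
      Polynomial.coeff_zero, Polynomial.coeff_X_pow, Nat.reduceEqDiff] at this
    split_ifs at this ⊢ <;> linarith
  have hs0 : ∀ j, (h.coeff j).coeff 0 = 0 := by
    intro j
    have := congrArg (fun f => (f.coeff j).coeff 0) H
    rcases j with _ | j <;>
    simp [-map_pow, Polynomial.coeff_C_mul, Polynomial.coeff_X_pow, Polynomial.mul_coeff_zero]
      at this <;> exact this
  have h0s : ∀ i, (h.coeff 0).coeff i =
      (if i = 3 then σ.coeff 0 else 0) - if 4 ≤ i then ρ.coeff (i - 4) else 0 := by
    intro i
    have := congrArg (fun f => (f.coeff 0).coeff i) H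
    simp only [Polynomial.coeff_sub, Polynomial.coeff_X_pow_mul',
      Polynomial.coeff_map, Polynomial.coeff_C_zero, Polynomial.coeff_mul_C, zero_sub,
      Polynomial.coeff_X_pow, Polynomial.coeff_neg, Polynomial.mul_coeff_zero,
      Polynomial.coeff_X_zero, mul_zero, zero_mul] at this
    split_ifs at this ⊢ <;> linarith
  -- the coefficients of `h` are constant along diagonals
  have hdiag : ∀ k i j, 3 ≤ i → (h.coeff (j + k)).coeff (i + k) = (h.coeff j).coeff i := by
    intro k
    induction k with
    | zero => intros; rfl
    | succ k ih =>
      intro i j hi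
      rw [← add_assoc, ← add_assoc, hss, ih i j hi, if_neg (by omega), add_zero]
  have hbig : ∀ i j, 3 ≤ i → (h.coeff j).coeff i = 0 := by
    intro i j hi
    rw [← hdiag (h.natDegree + 1) i j hi, Polynomial.coeff_eq_zero_of_natDegree_lt (p := h) (by omega)]
    simp
  have hρ : ρ = 0 := by
    ext m
    have := h0s (m + 4)
    rw [hbig _ _ (by omega)] at this
    simpa using this
  have h1 : ∀ j, (h.coeff j).coeff 1 = 0 := by
    rintro (_ | j)
    · simpa using h0s 1
    · simpa [hs0] using hss 0 j
  have h2 : ∀ j, (h.coeff j).coeff 2 = 0 := by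
    rintro (_ | j)
    · simpa using h0s 2
    · simpa [h1] using hss 1 j
  have hσ : σ = 0 := by
    ext j
    rcases j with _ | j
    · have := h0s 3
      rw [hbig _ _ le_rfl] at this
      simpa using this.symm
    · have := hss 2 j
      rw [hbig _ _ le_rfl, h2] at this
      simpa using this.symm
  refine ⟨hρ, hσ, ?_⟩
  ext j i
  rcases i with _ | _ | _ | i
  · simpa using hs0 j
  · simpa using h1 j
  · simpa using h2 j
  · simpa using hbig (i + 3) j (by omega)

lemma X_dvd_of_constantCoeff {R : Type*} [CommRing R] {f : PowerSeries R}
    (h : PowerSeries.constantCoeff f = 0) : ∃ f', f = PowerSeries.X * f' :=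
  PowerSeries.X_dvd_iff.mpr h

/-- The invariant lemma: if the kernel divides `x⁴ ρ(x) - x³ σ(z)` then `ρ = 0`. Modulo `t` the
kernel is `xz - 1`, and the common factor `t` can be removed again and again. -/
lemma invariant_lemma (ρ σ : Rx) (H : Rxz)
    (h : xv ^ 4 * inX ρ - xv ^ 3 * inZ σ = kap * H) : ρ = 0 := by
  ext1 n
  induction n generalizing ρ σ H with
  | zero =>
    have := congrArg PowerSeries.constantCoeff h
    simp only [xv, inX, inZ, kap, zv, tv, map_sub, map_mul, map_pow, zero_mul, sub_zero, map_one, map_add,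
      ← PowerSeries.coeff_zero_eq_constantCoeff_apply, PowerSeries.coeff_map,
      Polynomial.coe_mapRingHom, PowerSeries.coeff_zero_C, PowerSeries.coeff_zero_X] at this
    simpa using (eq_zero_of_kernel_dvd _ _ _ this).1
  | succ n ih =>
    have := congrArg PowerSeries.constantCoeff h
    simp only [xv, inX, inZ, kap, zv, tv, map_sub, map_mul, map_pow, zero_mul, sub_zero, map_one, map_add,
      ← PowerSeries.coeff_zero_eq_constantCoeff_apply, PowerSeries.coeff_map,
      Polynomial.coe_mapRingHom, PowerSeries.coeff_zero_C, PowerSeries.coeff_zero_X] at this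
    obtain ⟨h1, h2, h3⟩ := eq_zero_of_kernel_dvd _ _ _ this
    rw [PowerSeries.coeff_zero_eq_constantCoeff_apply] at h1 h2 h3
    obtain ⟨ρ', rfl⟩ := X_dvd_of_constantCoeff h1
    obtain ⟨σ', rfl⟩ := X_dvd_of_constantCoeff h2
    obtain ⟨H', rfl⟩ := X_dvd_of_constantCoeff h3
    rw [PowerSeries.coeff_succ_X_mul, ih ρ' σ' H', map_zero, map_zero]
    have hX : (PowerSeries.X : Rxz) ≠ 0 := PowerSeries.X_ne_zero
    apply mul_left_cancel₀ hX
    have e1 : inX PowerSeries.X = PowerSeries.X := PowerSeries.map_X _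
    have e2 : inZ PowerSeries.X = PowerSeries.X := PowerSeries.map_X _
    rw [map_mul, map_mul, e1, e2] at h
    linear_combination h

/-- The variable `x` of `ℚ[x]⟦t⟧`. -/
def xs : Rx := PowerSeries.C Polynomial.X

/-- The variable `t` of `ℚ[x]⟦t⟧`. -/
def ts : Rx := PowerSeries.X

lemma inX_xs : inX xs = xv := by simp [inX, xs, xv]
lemma inX_ts : inX ts = tv := by simp [inX, ts, tv]
lemma inZ_xs : inZ xs = zv := by simp [inZ, xs, zv]
lemma inZ_ts : inZ ts = tv := by simp [inZ, ts, tv]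
lemma inZ_inT (f : PowerSeries ℚ) : inZ (inT f) = inX (inT f) := by
  ext m
  simp [inZ, inX, inT]
lemma inT_X : inT PowerSeries.X = ts := by simp [inT, ts]

/-- Every `A ∈ ℚ[x]⟦t⟧` is `A₀(t) + x A'(x, t)`. -/
lemma exists_divX (A : Rx) : ∃ A' : Rx,
    A = inT (PowerSeries.mk fun n => (PowerSeries.coeff n A).coeff 0) + xs * A' := by
  refine ⟨PowerSeries.mk fun n => (PowerSeries.coeff n A).divX, ?_⟩
  ext1 n
  simp only [map_add, inT, PowerSeries.coeff_map, PowerSeries.coeff_mk, xs,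
    PowerSeries.coeff_C_mul]
  rw [add_comm, Polynomial.X_mul_divX_add]

/-- `ℓ = x (1/x + t Q(x, 0))`, the `x`-part of the decoupled functional equation
multiplied by `x`. -/
def ell : Rx := 1 + ts * xs * Qx

/-- The cubic `x³ (t L³ + α L² + (β + I) L + γ)` at `L = ℓ / x`, where
`I = (x + 1/x) - t (x + 1/x)²`. -/
def cubic (α β γ : PowerSeries ℚ) : Rx :=
  ts * ell ^ 3 + inT α * xs * ell ^ 2
    + (inT β * xs ^ 2 + xs * (xs ^ 2 + 1) - ts * (xs ^ 2 + 1) ^ 2) * ell + inT γ * xs ^ 3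

/-- With suitable `β`, `γ`, and `α = -1 - 2t²G`, the cubic is divisible by `x⁴`. -/
lemma exists_cubic_dvd : ∃ β γ : PowerSeries ℚ, ∃ ρ : Rx,
    cubic (-1 - 2 * PowerSeries.X ^ 2 * Q0) β γ = xs ^ 4 * ρ := by
  obtain ⟨A', hA⟩ := exists_divX Qx
  have h0 : (PowerSeries.mk fun n => (PowerSeries.coeff n Qx).coeff 0) = Q0 := by
    ext n
    simp [coeff_Qx, Q0]
  rw [h0] at hA
  obtain ⟨A'', hA'⟩ := exists_divX A'
  obtain ⟨A3, hA''⟩ := exists_divX A''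
  generalize (PowerSeries.mk fun n => (PowerSeries.coeff n A').coeff 0) = A1 at hA'
  generalize (PowerSeries.mk fun n => (PowerSeries.coeff n A'').coeff 0) = A2 at hA''
  rw [hA''] at hA'
  rw [hA'] at hA
  generalize hA0 : Q0 = A0 at *
  refine ⟨2 * PowerSeries.X + PowerSeries.X * A0 - 2 * PowerSeries.X ^ 2 * A1
      + PowerSeries.X ^ 3 * A0 ^ 2, -1 + PowerSeries.X * A1 - 2 * PowerSeries.X ^ 2 * A2, ?_⟩
  unfold cubic ell
  rw [hA]
  simp only [map_add, map_sub, map_mul, map_pow, map_neg, map_one, map_ofNat, inT_X]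
  generalize inT A0 = A0
  generalize inT A1 = A1
  generalize inT A2 = A2
  generalize ts = t
  generalize xs = x
  exact ⟨-t - t * A2 + t * A0 - t * x * A3 + t * x * A1 + t * x^2 * A2 + t * x^3 * A3 + 2 * t^2 * A3 - t^2 * A0 * A1 -
    t^2 * x * A1^2 - t^2 * x * A0 - t^2 * x * A0 * A2 - t^2 * x^2 * A1 - 2 * t^2 * x^2 * A1 * A2 - t^2 * x^2 * A0 * A3 -
    t^2 * x^3 * A2 - t^2 * x^3 * A2^2 - 2 * t^2 * x^3 * A1 * A3 - t^2 * x^4 * A3 - 2 * t^2 * x^4 * A2 * A3 - t^2 * x^5 * A3^2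
    + t^3 * A1^2 + 2 * t^3 * A0 * A2 + 4 * t^3 * x * A1 * A2 + 2 * t^3 * x * A0 * A3 + 3 * t^3 * x^2 * A2^2 +
    4 * t^3 * x^2 * A1 * A3 + 6 * t^3 * x^3 * A2 * A3 + 3 * t^3 * x^4 * A3^2 + t^4 * x * A0 * A1^2 + t^4 * x^2 * A1^3 +
    2 * t^4 * x^2 * A0 * A1 * A2 + 3 * t^4 * x^3 * A1^2 * A2 + t^4 * x^3 * A0 * A2^2 + 2 * t^4 * x^3 * A0 * A1 * A3 +
    3 * t^4 * x^4 * A1 * A2^2 + 3 * t^4 * x^4 * A1^2 * A3 + 2 * t^4 * x^4 * A0 * A2 * A3 + t^4 * x^5 * A2^3 +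
    6 * t^4 * x^5 * A1 * A2 * A3 + t^4 * x^5 * A0 * A3^2 + 3 * t^4 * x^6 * A2^2 * A3 + 3 * t^4 * x^6 * A1 * A3^2 +
    3 * t^4 * x^7 * A2 * A3^2 + t^4 * x^8 * A3^3, by ring⟩

/-- The polynomial equation with one catalytic variable satisfied by `ℓ`. On the kernel curve the
cubic in `L`, `I` equals the same cubic in `M`, `J`, so the invariant lemma applies. -/
lemma exists_cubic_eq_zero : ∃ β γ : PowerSeries ℚ,
    cubic (-1 - 2 * PowerSeries.X ^ 2 * Q0) β γ = 0 := by
  obtain ⟨β, γ, ρ, hρ⟩ := exists_cubic_dvd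
  refine ⟨β, γ, ?_⟩
  generalize -1 - 2 * PowerSeries.X ^ 2 * Q0 = α at *
  rw [hρ]
  suffices ρ = 0 by rw [this, mul_zero]
  -- `v = 1 / (1 + tz)`
  obtain ⟨v, hv⟩ : ∃ v : Rx, (1 + ts * xs) * v = 1 := by
    have : IsUnit (1 + ts * xs) := by
      rw [PowerSeries.isUnit_iff_constantCoeff]
      simp [ts]
    exact this.exists_right_inv
  -- `Q(0, tz) = G + z B`
  obtain ⟨B, hB⟩ := exists_divX Qz
  have h0 : (PowerSeries.mk fun n => (PowerSeries.coeff n Qz).coeff 0) = Q0 := by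
    ext n
    simp [coeff_Qz, Q0]
  rw [h0] at hB
  -- `N = M / z` where `M = z / (1 + tz) - t ((1 + tz) Q(0, tz) - G)`
  obtain ⟨N, hN⟩ : ∃ N : Rx, N = v - ts * (B + ts * Qz) := ⟨_, rfl⟩
  have hvx := congrArg inZ hv
  have hBx := congrArg inZ hB
  have hNx := congrArg inZ hN
  simp only [map_add, map_sub, map_mul, map_one, inZ_ts, inZ_xs, inZ_inT] at hvx hBx hNx
  have hFE := functional_equation
  have hl : inX ell - xv * (zv * inZ N) = -kap * (tv * xv * Qxz + inZ v) := by
    simp only [ell, hNx, map_add, map_mul, map_one, inX_ts, inX_xs]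
    unfold kap at hFE ⊢
    linear_combination (tv * xv) * hFE - tv * xv * hBx - (tv * xv ^ 2 * zv + 1) * hvx
  have hIJ : zv * (xv * (xv ^ 2 + 1) - tv * (xv ^ 2 + 1) ^ 2)
        - xv ^ 2 * ((1 - tv * zv) ^ 2 + zv ^ 2 * inZ v ^ 2)
      = kap * (((tv * zv + xv ^ 2) * (1 + tv * zv) - xv * zv) * inZ v ^ 2) := by
    unfold kap
    have h2 : (1 + tv * zv) ^ 2 * inZ v ^ 2 = 1 := by rw [← mul_pow, hvx, one_pow]
    linear_combination (-(zv * (xv * (xv ^ 2 + 1) - tv * (xv ^ 2 + 1) ^ 2)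
        - xv ^ 2 * (1 - tv * zv) ^ 2)) * h2
  have hρ' := congrArg inX hρ
  simp only [cubic, map_add, map_sub, map_mul, map_pow, map_one, inX_ts, inX_xs] at hρ'
  refine invariant_lemma ρ (ts * (xs * N) ^ 3 + inT α * (xs * N) ^ 2 + inT β * (xs * N)
    + ((1 - ts * xs) ^ 2 + xs ^ 2 * v ^ 2) * N + inT γ)
    (-(tv * xv * Qxz + inZ v) * (tv * (inX ell ^ 2 + inX ell * (xv * (zv * inZ N))
        + (xv * (zv * inZ N)) ^ 2) + inX (inT α) * xv * (inX ell + xv * (zv * inZ N))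
        + inX (inT β) * xv ^ 2 + (xv * (xv ^ 2 + 1) - tv * (xv ^ 2 + 1) ^ 2))
      + xv * inZ N * (((tv * zv + xv ^ 2) * (1 + tv * zv) - xv * zv) * inZ v ^ 2)) ?_
  simp only [map_add, map_sub, map_mul, map_pow, map_one, inZ_ts, inZ_xs, inZ_inT]
  linear_combination -hρ' + (tv * (inX ell ^ 2 + inX ell * (xv * (zv * inZ N))
        + (xv * (zv * inZ N)) ^ 2) + inX (inT α) * xv * (inX ell + xv * (zv * inZ N))
        + inX (inT β) * xv ^ 2 + (xv * (xv ^ 2 + 1) - tv * (xv ^ 2 + 1) ^ 2)) * hl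
      + xv * inZ N * hIJ

/-! ### Evaluation and differentiation in the catalytic variable -/

/-- The value of `F(x, t)` at `x = X₀(t)`, `t = t`, as a bare function: the coefficient of `tⁿ`
only involves the first `n + 1` coefficients of `F`. -/
def evFun (X₀ : PowerSeries ℚ) (F : Rx) : PowerSeries ℚ :=
  PowerSeries.mk fun n => PowerSeries.coeff n
    ((PowerSeries.trunc (n + 1) F).eval₂ (Polynomial.aeval X₀).toRingHom PowerSeries.X)

/-- Modulo `t^N`, evaluation is evaluation of the truncated polynomial; this makes multiplicativity
of `ev` a statement about polynomials. -/
lemma evFun_sub_dvd (X₀ : PowerSeries ℚ) (F : Rx) (N : ℕ) :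
    PowerSeries.X ^ N ∣ evFun X₀ F -
      (PowerSeries.trunc N F).eval₂ (Polynomial.aeval X₀).toRingHom PowerSeries.X := by
  rw [PowerSeries.X_pow_dvd_iff]
  intro n hn
  rw [map_sub, sub_eq_zero, evFun, PowerSeries.coeff_mk, PowerSeries.eval₂_trunc_eq_sum_range,
    PowerSeries.eval₂_trunc_eq_sum_range, map_sum, map_sum]
  refine Finset.sum_subset (Finset.range_subset_range.mpr hn) ?_
  intro m _ hm
  rw [PowerSeries.coeff_mul_X_pow', if_neg]
  simpa using hm

lemma eq_of_forall_X_pow_dvd {f h : PowerSeries ℚ} (H : ∀ N, PowerSeries.X ^ N ∣ f - h) :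
    f = h := by
  ext n
  have := PowerSeries.X_pow_dvd_iff.mp (H (n + 1)) n (by omega)
  rwa [map_sub, sub_eq_zero] at this

/-- Evaluation at `x = X₀(t)` as a ring homomorphism `ℚ[x]⟦t⟧ → ℚ⟦t⟧`. -/
def ev (X₀ : PowerSeries ℚ) : Rx →+* PowerSeries ℚ where
  toFun := evFun X₀
  map_one' := by
    refine eq_of_forall_X_pow_dvd fun N => ?_
    have := evFun_sub_dvd X₀ 1 (N + 1)
    rw [PowerSeries.trunc_one, Polynomial.eval₂_one] at this
    exact (pow_dvd_pow _ (Nat.le_succ N)).trans this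
  map_zero' := by
    refine eq_of_forall_X_pow_dvd fun N => ?_
    have := evFun_sub_dvd X₀ 0 N
    rwa [map_zero, Polynomial.eval₂_zero] at this
  map_add' F G := by
    refine eq_of_forall_X_pow_dvd fun N => ?_
    have h := evFun_sub_dvd X₀ (F + G) N
    rw [map_add, Polynomial.eval₂_add] at h
    convert dvd_sub h (dvd_add (evFun_sub_dvd X₀ F N) (evFun_sub_dvd X₀ G N)) using 1
    ring
  map_mul' F G := by
    refine eq_of_forall_X_pow_dvd fun N => ?_
    have h := evFun_sub_dvd X₀ (F * G) N
    have hF := evFun_sub_dvd X₀ F N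
    have hG := evFun_sub_dvd X₀ G N
    obtain ⟨D, hD⟩ : (Polynomial.X ^ N : Polynomial (Polynomial ℚ)) ∣ PowerSeries.trunc N (F * G)
        - PowerSeries.trunc N F * PowerSeries.trunc N G := by
      rw [Polynomial.X_pow_dvd_iff]
      intro d hd
      rw [Polynomial.coeff_sub, ← PowerSeries.trunc_trunc_mul_trunc, PowerSeries.coeff_trunc,
        if_pos hd, ← Polynomial.coe_mul, Polynomial.coeff_coe, sub_self]
    have hD' := congrArg (Polynomial.eval₂ (Polynomial.aeval X₀).toRingHom PowerSeries.X) hD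
    rw [Polynomial.eval₂_sub, Polynomial.eval₂_mul, Polynomial.eval₂_mul, Polynomial.eval₂_X_pow]
      at hD'
    generalize Polynomial.eval₂ (Polynomial.aeval X₀).toRingHom PowerSeries.X
      (PowerSeries.trunc N (F * G)) = a at *
    generalize Polynomial.eval₂ (Polynomial.aeval X₀).toRingHom PowerSeries.X
      (PowerSeries.trunc N F) = b at *
    generalize Polynomial.eval₂ (Polynomial.aeval X₀).toRingHom PowerSeries.X
      (PowerSeries.trunc N G) = c at *
    obtain ⟨u, hu⟩ := h
    obtain ⟨v, hv⟩ := hF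
    obtain ⟨w, hw⟩ := hG
    generalize Polynomial.eval₂ (Polynomial.aeval X₀).toRingHom PowerSeries.X D = d at *
    change PowerSeries.X ^ N ∣ evFun X₀ (F * G) - evFun X₀ F * evFun X₀ G
    exact ⟨u + d - evFun X₀ G * v - b * w,
      by linear_combination hu + hD' - evFun X₀ G * hv - b * hw⟩

lemma ev_ts (X₀ : PowerSeries ℚ) : ev X₀ ts = PowerSeries.X := by
  refine eq_of_forall_X_pow_dvd fun N => ?_
  have := evFun_sub_dvd X₀ ts (N + 2)
  rw [ts, PowerSeries.trunc_X, Polynomial.eval₂_X] at this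
  exact (pow_dvd_pow _ (show N ≤ N + 2 by omega)).trans this

lemma ev_xs (X₀ : PowerSeries ℚ) : ev X₀ xs = X₀ := by
  refine eq_of_forall_X_pow_dvd fun N => ?_
  have := evFun_sub_dvd X₀ xs (N + 1)
  rw [xs, PowerSeries.trunc_C, Polynomial.eval₂_C] at this
  refine (pow_dvd_pow _ (Nat.le_succ N)).trans ?_
  simpa [ev, xs] using this

lemma ev_inT (X₀ : PowerSeries ℚ) (f : PowerSeries ℚ) : ev X₀ (inT f) = f := by
  ext n
  change PowerSeries.coeff n (evFun X₀ (inT f)) = _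
  rw [evFun, PowerSeries.coeff_mk, PowerSeries.eval₂_trunc_eq_sum_range, map_sum]
  simp [inT, PowerSeries.coeff_C_mul, PowerSeries.coeff_X_pow]

/-- The derivative `∂/∂x` on `ℚ[x]⟦t⟧`. -/
def Dx (F : Rx) : Rx := PowerSeries.mk fun n => Polynomial.derivative (PowerSeries.coeff n F)

lemma Dx_add (F G : Rx) : Dx (F + G) = Dx F + Dx G := by
  ext1 n
  simp [Dx]

lemma Dx_sub (F G : Rx) : Dx (F - G) = Dx F - Dx G := by
  ext1 n
  simp [Dx]

lemma Dx_mul (F G : Rx) : Dx (F * G) = Dx F * G + F * Dx G := by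
  ext1 n
  simp [Dx, PowerSeries.coeff_mul, Polynomial.derivative_mul,
    Finset.sum_add_distrib]

lemma Dx_xs : Dx xs = 1 := by
  ext1 n
  simp only [Dx, xs, PowerSeries.coeff_mk, PowerSeries.coeff_C, PowerSeries.coeff_one]
  split_ifs <;> simp

lemma Dx_inT (f : PowerSeries ℚ) : Dx (inT f) = 0 := by
  ext1 n
  simp [Dx, inT]

lemma Dx_ts : Dx ts = 0 := by rw [← inT_X, Dx_inT]

lemma Dx_one : Dx 1 = 0 := by rw [← map_one inT, Dx_inT]

lemma Dx_zero : Dx 0 = 0 := by simpa using Dx_inT 0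

/-- Differentiating the cubic equation in `x`: after adding a multiple of the equation itself, the
unknown series only appear through the derivative of the cubic in `ℓ`. -/
lemma Dx_cubic {α β γ : PowerSeries ℚ} (h : cubic α β γ = 0) :
    (3 * ts * ell ^ 2 + 2 * inT α * xs * ell
        + (inT β * xs ^ 2 + xs * (xs ^ 2 + 1) - ts * (xs ^ 2 + 1) ^ 2)) * (xs * Dx ell - ell)
      + (xs ^ 2 - 1) * (xs - 2 * ts * (xs ^ 2 + 1)) * ell = 0 := by
  have h' := congrArg Dx h
  unfold cubic at h h'
  simp only [pow_succ, pow_zero, one_mul, Dx_add, Dx_sub, Dx_mul, Dx_xs, Dx_ts, Dx_inT, Dx_one,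
    Dx_zero] at h'
  linear_combination xs * h' - 3 * h

/-- At a point `X₀` killing `(x² - 1)(x - 2t(x² + 1))` the cubic has a double root, namely
`l = ℓ(X₀)`. -/
lemma double_root {α β γ : PowerSeries ℚ} (h : cubic α β γ = 0) (X₀ : PowerSeries ℚ)
    (hX : (X₀ ^ 2 - 1) * (X₀ - 2 * PowerSeries.X * (X₀ ^ 2 + 1)) = 0) :
    ∃ l : PowerSeries ℚ,
      PowerSeries.X * l ^ 3 + α * X₀ * l ^ 2 + (β * X₀ ^ 2 + X₀ * (X₀ ^ 2 + 1)
        - PowerSeries.X * (X₀ ^ 2 + 1) ^ 2) * l + γ * X₀ ^ 3 = 0 ∧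
      3 * PowerSeries.X * l ^ 2 + 2 * α * X₀ * l + (β * X₀ ^ 2 + X₀ * (X₀ ^ 2 + 1)
        - PowerSeries.X * (X₀ ^ 2 + 1) ^ 2) = 0 := by
  refine ⟨ev X₀ ell, ?_, ?_⟩
  · have := congrArg (ev X₀) h
    simpa only [cubic, map_add, map_sub, map_mul, map_pow, map_one, map_zero, ev_ts, ev_xs, ev_inT]
      using this
  · have := congrArg (ev X₀) (Dx_cubic h)
    simp only [map_add, map_sub, map_mul, map_pow, map_one, map_zero, ev_ts, ev_xs, ev_inT, hX,
      zero_mul, add_zero, map_ofNat] at this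
    -- `x ℓ' - ℓ` has constant term `-1` in `t`
    refine (mul_eq_zero.mp this).resolve_right fun h0 => ?_
    have h1 := congrArg PowerSeries.constantCoeff h0
    rw [ell, Dx_add, mul_assoc, Dx_mul, Dx_ts, Dx_one] at h1
    simp [ev_ts] at h1

/-- The equation `X₀ = 2t (1 + X₀²)` has a nonzero power series solution, `2t C(4t²)` with `C` the
Catalan series. -/
lemma exists_X₀ : ∃ X₀ : PowerSeries ℚ, X₀ = 2 * PowerSeries.X * (X₀ ^ 2 + 1) ∧ X₀ ≠ 0 := by
  have h := congrArg (PowerSeries.map (Nat.castRingHom ℚ))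
    PowerSeries.catalanSeries_sq_mul_X_add_one
  have h' := congrArg (fun f => PowerSeries.expand 2 two_ne_zero (PowerSeries.rescale (4 : ℚ) f)) h
  simp only [map_add, map_mul, map_pow, map_one, PowerSeries.map_X, PowerSeries.rescale_X,
    PowerSeries.expand_X, PowerSeries.expand_C] at h'
  set c := (PowerSeries.expand 2 two_ne_zero) (PowerSeries.rescale (4 : ℚ)
    (PowerSeries.map (Nat.castRingHom ℚ) PowerSeries.catalanSeries)) with hc
  have h4 : (PowerSeries.C (4 : ℚ)) = 4 := map_ofNat _ 4
  rw [h4] at h'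
  have hX : 2 * PowerSeries.X * c = 2 * PowerSeries.X * ((2 * PowerSeries.X * c) ^ 2 + 1) := by
    linear_combination (-2 * PowerSeries.X) * h'
  refine ⟨2 * PowerSeries.X * c, hX, ?_⟩
  intro h0
  rw [h0] at hX
  have := congrArg (PowerSeries.coeff 1) hX
  have h2 : (2 : PowerSeries ℚ) = PowerSeries.C 2 := (map_ofNat _ 2).symm
  rw [h2, mul_assoc] at this
  simp at this

/-! ### Rational parametrization of the double roots -/

/-- The rational parametrization, in terms of `p = L₁ + L₂` and `r = L₁ L₂ / p²`. Eliminating `p`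
gives `((16t² - 1) / (16t² + 1))² = 4r(r + 2)³ / (2r² - 10r - 1)²`, so `1 + 2 / r` is a square `e²`
with `e` rational in `t²` and `r`; then `T = Z² = (3 + e) / (1 - e)` parametrizes `t²`, `r`, `p²`. -/
lemma exists_param_aux {K : Type*} [Field K] [CharZero K] {t p r : K} (ht : t ≠ 0) (hp : p ≠ 0)
    (hm : 16 * t ^ 2 ≠ 1) (hm' : 16 * t ^ 2 + 1 ≠ 0)
    (hA : t ^ 2 * p ^ 4 * (1 - 4 * r) ^ 3 = 16)
    (hB : 2 * t ^ 2 * p ^ 2 * (2 * r ^ 2 - 10 * r - 1) = 16 * t ^ 2 + 1) :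
    ∃ Z : K, 256 * t ^ 2 * Z ^ 6 = (Z ^ 2 - 1) * (Z ^ 2 + 3) ^ 3 ∧
      8 * (t * p * (1 - r)) * Z ^ 3 = Z ^ 4 + 6 * Z ^ 2 - 3 := by
  have hm1 : 16 * t ^ 2 - 1 ≠ 0 := sub_ne_zero.mpr hm
  have hN : 2 * r ^ 2 - 10 * r - 1 ≠ 0 := fun h => hm' (by rw [← hB, h, mul_zero])
  have hsq : (16 * t ^ 2 - 1) ^ 2 * (2 * r ^ 2 - 10 * r - 1) ^ 2
      = 4 * r * (r + 2) ^ 3 * (16 * t ^ 2 + 1) ^ 2 := by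
    rw [← hB]
    linear_combination (-(16 * t ^ 2 + 1 + 2 * t ^ 2 * p ^ 2 * (2 * r ^ 2 - 10 * r - 1))
      * (2 * r ^ 2 - 10 * r - 1) ^ 2) * hB
      + (4 * t ^ 2 * (2 * r ^ 2 - 10 * r - 1) ^ 2) * hA
  have hne : 4 * r * (r + 2) ^ 3 * (16 * t ^ 2 + 1) ^ 2 ≠ 0 := by
    rw [← hsq]
    positivity
  have hr : r ≠ 0 := by
    rintro rfl
    simp at hne
  have hr2 : r + 2 ≠ 0 := by
    intro h
    simp [h] at hne
  -- `e` is a rational square root of `1 + 2 / r`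
  obtain ⟨e, he⟩ : ∃ e, e = (16 * t ^ 2 - 1) * (2 * r ^ 2 - 10 * r - 1)
    / ((16 * t ^ 2 + 1) * (2 * r * (r + 2))) := ⟨_, rfl⟩
  have hee : e ^ 2 * r = r + 2 := by
    rw [he, div_pow, mul_pow, hsq]
    field_simp
    ring
  have he' : e * ((16 * t ^ 2 + 1) * (2 * r * (r + 2)))
      = (16 * t ^ 2 - 1) * (2 * r ^ 2 - 10 * r - 1) := by
    rw [he]
    field_simp
  have hr' : (e ^ 2 - 1) * r = 2 := by linear_combination hee
  have he1 : e ^ 2 - 1 ≠ 0 := by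
    intro h
    rw [h, zero_mul] at hr'
    exact two_ne_zero hr'.symm
  have h1e : 1 - e ≠ 0 := fun h => he1 (by linear_combination (-1 - e) * h)
  have h1e' : 1 + e ≠ 0 := fun h => he1 (by linear_combination (e - 1) * h)
  have hrr : r = 2 / (e ^ 2 - 1) := by
    field_simp
    linear_combination hr'
  have hkey : 16 * t ^ 2 * ((3 + e) ^ 3 * (1 - e)) = (1 + e) * (3 - e) ^ 3 := by
    rw [hrr] at he'
    field_simp at he'
    linear_combination (-1 : K) * he'
  have h3e : 3 + e ≠ 0 := by
    intro h
    have : e = -3 := by linear_combination h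
    rw [this] at hkey
    norm_num at hkey
  have hB' : 2 * t ^ 2 * p ^ 2 * (27 - 18 * e ^ 2 - e ^ 4) = (16 * t ^ 2 + 1) * (e ^ 2 - 1) ^ 2 := by
    rw [hrr] at hB
    field_simp at hB
    linear_combination hB
  have hp2 : t ^ 2 * p ^ 2 * (3 + e) ^ 3 = (1 + e) ^ 2 * (1 - e) := by
    have hq : 27 - 18 * e ^ 2 - e ^ 4 ≠ 0 := by
      intro h
      rw [h, mul_zero] at hB'
      exact mul_ne_zero hm' (pow_ne_zero 2 he1) hB'.symm
    apply mul_left_cancel₀ (mul_ne_zero hq h1e)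
    linear_combination ((1 - e) * (3 + e) ^ 3 / 2) * hB' + ((e ^ 2 - 1) ^ 2 / 2) * hkey
  have hZ2 : ((1 + e) / (t * p * (3 + e))) ^ 2 = (3 + e) / (1 - e) := by
    field_simp
    linear_combination -hp2
  generalize hZ : (1 + e) / (t * p * (3 + e)) = Z at hZ2
  refine ⟨Z, ?_, ?_⟩
  · rw [show Z ^ 6 = (Z ^ 2) ^ 3 by ring, hZ2]
    field_simp
    linear_combination 16 * hkey
  · rw [show Z ^ 3 = Z * Z ^ 2 by ring, show Z ^ 4 = (Z ^ 2) ^ 2 by ring, hZ2, ← hZ, hrr]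
    field_simp
    ring

/-- If the cubic `t L³ + α L² + (β + w) L + γ` has a double root `Lₖ` for each of the three values
`wₖ = 2 - 4t, -2 - 4t, 1 / (4t)`, then `t` and `α` are rationally parametrized by some `Z`. -/
lemma exists_param {K : Type*} [Field K] [CharZero K] {t α β γ L₁ L₂ L₃ : K} (ht : t ≠ 0)
    (hm : 16 * t ^ 2 ≠ 1) (hm' : 16 * t ^ 2 + 1 ≠ 0)
    (h₁ : t * L₁ ^ 3 + α * L₁ ^ 2 + (β + (2 - 4 * t)) * L₁ + γ = 0)
    (h₂ : t * L₂ ^ 3 + α * L₂ ^ 2 + (β + (-2 - 4 * t)) * L₂ + γ = 0)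
    (h₃ : t * L₃ ^ 3 + α * L₃ ^ 2 + (β + 1 / (4 * t)) * L₃ + γ = 0)
    (d₁ : 3 * t * L₁ ^ 2 + 2 * α * L₁ + (β + (2 - 4 * t)) = 0)
    (d₂ : 3 * t * L₂ ^ 2 + 2 * α * L₂ + (β + (-2 - 4 * t)) = 0)
    (d₃ : 3 * t * L₃ ^ 2 + 2 * α * L₃ + (β + 1 / (4 * t)) = 0) :
    ∃ Z : K, 256 * t ^ 2 * Z ^ 6 = (Z ^ 2 - 1) * (Z ^ 2 + 3) ^ 3 ∧
      -4 * α * Z ^ 3 = Z ^ 4 + 6 * Z ^ 2 - 3 := by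
  obtain ⟨u, hu⟩ : ∃ u, u = 1 / (4 * t) := ⟨_, rfl⟩
  rw [← hu] at h₃ d₃
  have htu : 4 * t * u = 1 := by
    rw [hu]
    field_simp
  have hne₁₂ : L₁ - L₂ ≠ 0 := by
    intro h
    have : (4 : K) = 0 := by
      linear_combination d₁ - d₂ - (3 * t * (L₁ + L₂) + 2 * α) * h
    norm_num at this
  have hne₁₃ : L₁ - L₃ ≠ 0 := by
    intro h
    have h0 : (4 * t - 1) ^ 2 = 0 := by
      linear_combination -4 * t * (d₁ - d₃ - (3 * t * (L₁ + L₃) + 2 * α) * h) - htu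
    exact hm (by linear_combination (4 * t + 1) * (pow_eq_zero_iff two_ne_zero).mp h0)
  have hne₂₃ : L₂ - L₃ ≠ 0 := by
    intro h
    have h0 : (4 * t + 1) ^ 2 = 0 := by
      linear_combination -4 * t * (d₂ - d₃ - (3 * t * (L₂ + L₃) + 2 * α) * h) - htu
    exact hm (by linear_combination (4 * t - 1) * (pow_eq_zero_iff two_ne_zero).mp h0)
  -- the `Lₖ` are the three roots of `2t L³ + α L² - γ`
  have c₁₂ : 2 * t * (L₁ ^ 2 + L₁ * L₂ + L₂ ^ 2) + α * (L₁ + L₂) = 0 := by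
    apply mul_left_cancel₀ hne₁₂
    linear_combination h₂ - L₂ * d₂ - h₁ + L₁ * d₁
  have c₁₃ : 2 * t * (L₁ ^ 2 + L₁ * L₃ + L₃ ^ 2) + α * (L₁ + L₃) = 0 := by
    apply mul_left_cancel₀ hne₁₃
    linear_combination h₃ - L₃ * d₃ - h₁ + L₁ * d₁
  have hs : 2 * t * (L₁ + L₂ + L₃) + α = 0 := by
    apply mul_left_cancel₀ hne₂₃
    linear_combination c₁₂ - c₁₃
  have he₂ : L₁ * L₂ + (L₁ + L₂) * L₃ = 0 := by
    apply mul_left_cancel₀ (mul_ne_zero two_ne_zero ht)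
    linear_combination (L₁ + L₂) * hs - c₁₂
  have hp : L₁ + L₂ ≠ 0 := by
    intro h
    have h0 : L₁ ^ 2 = 0 := by linear_combination (L₁ + L₃) * h - he₂
    have h1 : L₁ = 0 := (pow_eq_zero_iff two_ne_zero).mp h0
    exact hne₁₂ (by linear_combination 2 * h1 - h)
  obtain ⟨p, hp'⟩ : ∃ p, p = L₁ + L₂ := ⟨_, rfl⟩
  obtain ⟨r, hr⟩ : ∃ r, r = L₁ * L₂ / p ^ 2 := ⟨_, rfl⟩
  rw [← hp'] at hp
  have hr' : L₁ * L₂ = r * p ^ 2 := by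
    rw [hr]
    field_simp
  have hL₃ : L₃ = -(r * p) := by
    apply mul_left_cancel₀ hp
    linear_combination he₂ - hr' + L₃ * hp'
  have hα : α = -2 * t * (p * (1 - r)) := by
    linear_combination hs - 2 * t * hL₃ + 2 * t * hp'
  have hdiff : t * (L₁ - L₂) * (p * (1 - 4 * r)) = 4 := by
    linear_combination d₂ - d₁ - 3 * t * (L₁ - L₂) * hp' + 2 * (L₁ - L₂) * hα
  have hdisc : (L₁ - L₂) ^ 2 = p ^ 2 * (1 - 4 * r) := by
    linear_combination -4 * hr' - (p + L₁ + L₂) * hp'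
  have hA : t ^ 2 * p ^ 4 * (1 - 4 * r) ^ 3 = 16 := by
    linear_combination (t * (L₁ - L₂) * (p * (1 - 4 * r)) + 4) * hdiff
      - t ^ 2 * (p * (1 - 4 * r)) ^ 2 * hdisc
  have hB : 2 * t ^ 2 * p ^ 2 * (2 * r ^ 2 - 10 * r - 1) = 16 * t ^ 2 + 1 := by
    have hs₂ : L₁ ^ 2 + L₂ ^ 2 = p ^ 2 - 2 * r * p ^ 2 := by
      linear_combination -2 * hr' - (p + L₁ + L₂) * hp'
    rw [hL₃, hα] at d₃
    rw [hα] at d₁ d₂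
    linear_combination 2 * t * (d₁ + d₂ - 2 * d₃) - 6 * t ^ 2 * hs₂ + htu
      + 4 * t * (-2 * t * (p * (1 - r))) * hp'
  obtain ⟨Z, hZ, hZ'⟩ := exists_param_aux ht hp hm hm' hA hB
  exact ⟨Z, hZ, by rw [hα]; linear_combination hZ'⟩

/-! ### The parametrizing power series and the differential equation -/

instance charZero_powerSeries : CharZero (PowerSeries ℚ) :=
  charZero_of_injective_ringHom (f := PowerSeries.C) PowerSeries.C_injective

/-- At a point `x` with `x + 1/x = 1/(2t)`, the equations for `ℓ` become equations for `ℓ / x`. -/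
lemma catalan_point {K : Type*} [Field K] [CharZero K] {t x : K} (ht : t ≠ 0) (hx : x ≠ 0)
    (hw : x = 2 * t * (x ^ 2 + 1)) (α β γ l : K) :
    (t * l ^ 3 + α * x * l ^ 2 + (β * x ^ 2 + x * (x ^ 2 + 1) - t * (x ^ 2 + 1) ^ 2) * l
        + γ * x ^ 3 = 0 →
      t * (l / x) ^ 3 + α * (l / x) ^ 2 + (β + 1 / (4 * t)) * (l / x) + γ = 0) ∧
    (3 * t * l ^ 2 + 2 * α * x * l + (β * x ^ 2 + x * (x ^ 2 + 1) - t * (x ^ 2 + 1) ^ 2) = 0 →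
      3 * t * (l / x) ^ 2 + 2 * α * (l / x) + (β + 1 / (4 * t)) = 0) := by
  have hV : x * (x ^ 2 + 1) - t * (x ^ 2 + 1) ^ 2 = x ^ 2 / (4 * t) := by
    field_simp
    linear_combination (-x + 2 * t * (x ^ 2 + 1)) * hw
  rw [add_sub_assoc, hV]
  constructor
  · intro h
    field_simp at h ⊢
    linear_combination h
  · intro h
    field_simp at h ⊢
    linear_combination h

/-- The rational parametrization of `t²` and `G`, by a power series `Z`. -/
lemma exists_Z : ∃ Z : PowerSeries ℚ,
    256 * PowerSeries.X ^ 2 * Z ^ 6 = (Z ^ 2 - 1) * (Z ^ 2 + 3) ^ 3 ∧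
    4 * (1 + 2 * PowerSeries.X ^ 2 * Q0) * Z ^ 3 = Z ^ 4 + 6 * Z ^ 2 - 3 := by
  obtain ⟨β, γ, h⟩ := exists_cubic_eq_zero
  obtain ⟨X₀, hX₀, hX₀0⟩ := exists_X₀
  obtain ⟨l₁, h₁, d₁⟩ := double_root h 1 (by ring)
  obtain ⟨l₂, h₂, d₂⟩ := double_root h (-1) (by ring)
  obtain ⟨l₃, h₃, d₃⟩ := double_root h X₀ (by linear_combination (X₀ ^ 2 - 1) * hX₀)
  -- the parametrization is obtained in the fraction field of `ℚ⟦t⟧`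
  let K := FractionRing (PowerSeries ℚ)
  let φ : PowerSeries ℚ →+* K := algebraMap (PowerSeries ℚ) K
  have hφ : Function.Injective φ := IsFractionRing.injective _ _
  have : CharZero K := charZero_of_injective_ringHom hφ
  have ht : φ PowerSeries.X ≠ 0 := by
    rw [Ne, map_eq_zero_iff φ hφ]
    exact PowerSeries.X_ne_zero
  have hx : φ X₀ ≠ 0 := by rwa [Ne, map_eq_zero_iff φ hφ]
  have hm : 16 * φ PowerSeries.X ^ 2 ≠ 1 := by
    intro h0
    have h1 : 16 * PowerSeries.X ^ 2 = (1 : PowerSeries ℚ) := hφ (by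
      simpa only [map_mul, map_pow, map_add, map_one, map_zero, map_ofNat] using h0)
    simpa using congrArg PowerSeries.constantCoeff h1
  have hm' : 16 * φ PowerSeries.X ^ 2 + 1 ≠ 0 := by
    intro h0
    have h1 : 16 * PowerSeries.X ^ 2 + 1 = (0 : PowerSeries ℚ) := hφ (by
      simpa only [map_mul, map_pow, map_add, map_one, map_zero, map_ofNat] using h0)
    simpa using congrArg PowerSeries.constantCoeff h1
  have hw := congrArg φ hX₀
  replace h₁ := congrArg φ h₁
  replace h₂ := congrArg φ h₂
  replace h₃ := congrArg φ h₃
  replace d₁ := congrArg φ d₁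
  replace d₂ := congrArg φ d₂
  replace d₃ := congrArg φ d₃
  set α := -1 - 2 * PowerSeries.X ^ 2 * Q0 with hα
  simp only [map_add, map_sub, map_mul, map_pow, map_neg, map_one, map_ofNat, map_zero]
    at hw h₁ h₂ h₃ d₁ d₂ d₃
  obtain ⟨Z, hZ, hZ'⟩ := exists_param (K := K) (t := φ PowerSeries.X) (α := φ α) (β := φ β)
    (γ := φ γ) (L₁ := φ l₁) (L₂ := -φ l₂) (L₃ := φ l₃ / φ X₀) ht hm hm'
    (by linear_combination h₁) (by linear_combination -h₂)
    ((catalan_point ht hx hw (φ α) (φ β) (φ γ) (φ l₃)).1 h₃)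
    (by linear_combination d₁) (by linear_combination d₂)
    ((catalan_point ht hx hw (φ α) (φ β) (φ γ) (φ l₃)).2 d₃)
  -- `Z` is a root of a monic polynomial over the integrally closed ring `ℚ⟦t⟧`
  have hint : IsIntegral (PowerSeries ℚ) Z := by
    refine ⟨Polynomial.X ^ 8 + Polynomial.C (8 - 256 * PowerSeries.X ^ 2) * Polynomial.X ^ 6
      + Polynomial.C 18 * Polynomial.X ^ 4 - Polynomial.C 27, by monicity!, ?_⟩
    simp only [Polynomial.eval₂_add, Polynomial.eval₂_sub, Polynomial.eval₂_mul,
      Polynomial.eval₂_C, Polynomial.eval₂_X, Polynomial.eval₂_pow]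
    change _ + φ _ * _ + φ _ * _ - φ _ = 0
    simp only [map_sub, map_mul, map_pow, map_ofNat]
    linear_combination -hZ
  obtain ⟨z, rfl⟩ := IsIntegrallyClosed.isIntegral_iff.mp hint
  refine ⟨z, hφ ?_, hφ ?_⟩
  · simp only [map_add, map_sub, map_mul, map_pow, map_one, map_ofNat]
    exact hZ
  · simp only [map_add, map_sub, map_mul, map_pow, map_neg, map_one, map_ofNat, hα] at hZ' ⊢
    linear_combination hZ'

/-- The Euler operator `θ = t d/dt`. -/
def theta (f : PowerSeries ℚ) : PowerSeries ℚ := PowerSeries.X * PowerSeries.derivative ℚ f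

lemma coeff_theta (f : PowerSeries ℚ) (n : ℕ) :
    PowerSeries.coeff n (theta f) = n * PowerSeries.coeff n f := by
  rcases n with _ | n
  · simp [theta]
  · rw [theta, PowerSeries.coeff_succ_X_mul]
    simp [PowerSeries.coeff_derivative, mul_comm]

/-- The differential equation `(θ - 2/3) θ H = 16 t² (θ - 1/3) (θ - 1) H` for the series `H`
parametrized by `Z`, multiplied by `3`. It follows from `4Z³ θH = (Z² - 1)(Z² + 3)` and
`(Z² - 3)² θZ = Z (Z² - 1)(Z² + 3)`. -/
lemma ode {H Z : PowerSeries ℚ}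
    (hZ : 256 * PowerSeries.X ^ 2 * Z ^ 6 = (Z ^ 2 - 1) * (Z ^ 2 + 3) ^ 3)
    (hH : 4 * H * Z ^ 3 = Z ^ 4 + 6 * Z ^ 2 - 3) :
    3 * theta (theta H) - 2 * theta H
      = 16 * PowerSeries.X ^ 2 * (3 * theta (theta H) - 4 * theta H + H) := by
  -- at `t = 0` the equation for `Z` forces `Z² = 1`, as `Z² ≠ -3` over `ℚ`
  have hc : PowerSeries.constantCoeff Z ^ 2 = 1 := by
    have := congrArg PowerSeries.constantCoeff hZ
    simp only [map_mul, map_pow, map_sub, map_add, map_one, map_ofNat,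
      PowerSeries.constantCoeff_X] at this
    generalize PowerSeries.constantCoeff Z = c at *
    have h3 : c ^ 2 + 3 ≠ 0 := by positivity
    have h4 : (c ^ 2 - 1) * (c ^ 2 + 3) ^ 3 = 0 := by linear_combination -this
    rcases mul_eq_zero.mp h4 with h | h
    · linarith
    · exact absurd h (pow_ne_zero 3 h3)
  have hZ0 : Z ≠ 0 := by
    rintro rfl
    simp at hc
  have hZ3 : Z ^ 2 + 3 ≠ 0 := by
    intro h
    have := congrArg PowerSeries.constantCoeff h
    simp only [map_add, map_pow, map_ofNat, hc, map_zero] at this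
    norm_num at this
  have hZ3' : Z ^ 2 - 3 ≠ 0 := by
    intro h
    have := congrArg PowerSeries.constantCoeff h
    simp only [map_sub, map_pow, map_ofNat, hc, map_zero] at this
    norm_num at this
  have tsub : ∀ f g, theta (f - g) = theta f - theta g := fun f g => by
    simp only [theta, map_sub]; ring
  have tadd : ∀ f g, theta (f + g) = theta f + theta g := fun f g => by
    simp only [theta, map_add]; ring
  have tmul : ∀ f g, theta (f * g) = theta f * g + f * theta g := fun f g => by
    simp only [theta, Derivation.leibniz, smul_eq_mul]; ring
  have tone : theta 1 = 0 := by simp [theta]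
  have tnum : ∀ n : ℕ, theta (n : PowerSeries ℚ) = 0 := fun n => by simp [theta]
  have t2 : theta 3 = 0 := tnum 3
  have t4 : theta 4 = 0 := tnum 4
  have t6 : theta 6 = 0 := tnum 6
  have t256 : theta 256 = 0 := tnum 256
  have tX : theta PowerSeries.X = PowerSeries.X := by simp [theta]
  have h1 : (Z ^ 2 - 3) ^ 2 * theta Z = Z * (Z ^ 2 - 1) * (Z ^ 2 + 3) := by
    have := congrArg theta hZ
    simp only [pow_succ, pow_zero, one_mul, tsub, tadd, tmul, tone, t2, t256, tX] at this
    apply mul_left_cancel₀ (mul_ne_zero two_ne_zero (pow_ne_zero 2 hZ3))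
    linear_combination -Z * this + (2 * Z + 6 * theta Z) * hZ
  have h2 : 4 * theta H * Z ^ 3 = Z ^ 4 + 2 * Z ^ 2 - 3 := by
    have := congrArg theta hH
    simp only [pow_succ, pow_zero, one_mul, tsub, tadd, tmul, t2, t4, t6] at this
    apply mul_left_cancel₀ hZ0
    linear_combination Z * this - 3 * theta Z * hH + h1
  have h3 : 4 * theta (theta H) * (Z ^ 2 - 3) ^ 2 * Z ^ 3
      = (Z ^ 2 - 1) * (Z ^ 2 + 3) * (Z ^ 4 - 2 * Z ^ 2 + 9) := by
    have := congrArg theta h2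
    have t2' : theta 2 = 0 := tnum 2
    simp only [pow_succ, pow_zero, one_mul, tsub, tadd, tmul, t2, t2', t4] at this
    apply mul_left_cancel₀ hZ0
    linear_combination (Z ^ 2 - 3) ^ 2 * Z * this - 3 * (Z ^ 2 - 3) ^ 2 * theta Z * h2
      + (Z ^ 4 - 2 * Z ^ 2 + 9) * h1
  apply mul_left_cancel₀ (mul_ne_zero (mul_ne_zero (show (4 : PowerSeries ℚ) ≠ 0 by norm_num) (pow_ne_zero 3 hZ0))
    (pow_ne_zero 2 hZ3'))
  linear_combination (3 - 48 * PowerSeries.X ^ 2) * h3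
    + (-2 + 64 * PowerSeries.X ^ 2) * (Z ^ 2 - 3) ^ 2 * h2
    - 16 * PowerSeries.X ^ 2 * (Z ^ 2 - 3) ^ 2 * hH - hZ

/-- The two-term recurrence for the numbers of excursions: the coefficient of `t^(n + 4)` in the
differential equation for `1 + 2t²G`. -/
lemma q_rec (n : ℕ) : 3 * ((n : ℚ) + 4) * (3 * n + 10) * q (n + 2) 0 0
    = 48 * (n + 1) * (3 * n + 5) * q n 0 0 := by
  obtain ⟨Z, hZ, hH⟩ := exists_Z
  have h := congrArg (PowerSeries.coeff (n + 2 + 2)) (ode hZ hH)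
  have num : ∀ k : ℕ, (k : PowerSeries ℚ) = PowerSeries.C (k : ℚ) := fun k => (map_natCast _ k).symm
  have hco : ∀ m, PowerSeries.coeff (m + 2) (1 + 2 * PowerSeries.X ^ 2 * Q0) = 2 * q m 0 0 := by
    intro m
    rw [show (2 : PowerSeries ℚ) = PowerSeries.C (2 : ℚ) from num 2, mul_assoc, map_add,
      PowerSeries.coeff_C_mul, PowerSeries.coeff_X_pow_mul, PowerSeries.coeff_one]
    simp [Q0]
  generalize 1 + 2 * PowerSeries.X ^ 2 * Q0 = H at *
  rw [show (2 : PowerSeries ℚ) = PowerSeries.C (2 : ℚ) from num 2,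
    show (3 : PowerSeries ℚ) = PowerSeries.C (3 : ℚ) from num 3,
    show (4 : PowerSeries ℚ) = PowerSeries.C (4 : ℚ) from num 4,
    show (16 : PowerSeries ℚ) = PowerSeries.C (16 : ℚ) from num 16, mul_assoc] at h
  simp only [map_add, map_sub, PowerSeries.coeff_C_mul, PowerSeries.coeff_X_pow_mul, coeff_theta,
    hco] at h
  push_cast at h
  linear_combination (3 / 2) * h

/-! ### The closed form -/

lemma q_odd (n : ℕ) : q (2 * n + 1) 0 0 = 0 := by
  induction n with
  | zero => simp [q_succ_zero_zero, q_zero]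
  | succ n ih =>
    have h := q_rec (2 * n + 1)
    rw [ih, mul_zero] at h
    refine (mul_eq_zero.mp h).resolve_left ?_
    positivity

theorem gessel_excursions_closed_form (n : ℕ) :
    (g (2 * n) 0 0 : ℚ) * (ascPochhammer ℚ n).eval (5 / 3) * (ascPochhammer ℚ n).eval 2
      = (ascPochhammer ℚ n).eval (5 / 6) * (ascPochhammer ℚ n).eval (1 / 2) * 16 ^ n ∧
    g (2 * n + 1) 0 0 = 0 := by
  refine ⟨?_, by simpa [q] using q_odd n⟩
  change q (2 * n) 0 0 * _ * _ = _
  induction n with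
  | zero => simp [q_zero]
  | succ n ih =>
    have h := q_rec (2 * n)
    push_cast at h
    simp only [ascPochhammer_succ_eval]
    rw [show 2 * (n + 1) = 2 * n + 2 by ring, pow_succ]
    generalize q (2 * n + 2) 0 0 = b at *
    generalize q (2 * n) 0 0 = a at *
    have h' : b * ((5 / 3 + n) * (2 + n)) = a * (16 * ((5 / 6 + n) * (1 / 2 + n))) := by
      linear_combination h / 36
    linear_combination (ascPochhammer ℚ n).eval (5 / 3) * (ascPochhammer ℚ n).eval 2 * h'
      + (16 * ((5 / 6 + (n : ℚ)) * (1 / 2 + n))) * ih
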